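/- arXiv:1407.4897 — 2 statements merged into one kernel-verified Lean document; each statement's English description precedes it below -/
import Mathlib

section
/- For any integer k ≥ 2 and any 0 ≤ ε < 1 one has M_{k,ε} ≤ (k/(k−1))·log(2k−1); equivalently, for every square-integrable F : [0,∞)^k → ℝ supported on (1+ε)·R_k, ∑_{i=1}^k J_{i,1−ε}(F) ≤ (k/(k−1))·log(2k−1)·I(F). -/
open MeasureTheory

/-- The scaled simplex `c · R_k = {t ∈ [0,∞)^k : t₁ + ⋯ + t_k ≤ c}`. -/
def simplex (k : ℕ) (c : ℝ) : Set (Fin k → ℝ) :=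
  {t | (∀ i, 0 ≤ t i) ∧ ∑ i, t i ≤ c}

/-- `I(F) = ∫_{[0,∞)^k} F(t)² dt`. -/
noncomputable def sieveI {k : ℕ} (F : (Fin k → ℝ) → ℝ) : ℝ :=
  ∫ t in {t : Fin k → ℝ | ∀ i, 0 ≤ t i}, (F t) ^ 2

/-- `J_i(F) = ∫_{[0,∞)^{k-1}} (∫_0^∞ F(t) dt_i)² dt_1 ⋯ dt_{i-1} dt_{i+1} ⋯ dt_k`. -/
noncomputable def sieveJ {k : ℕ} (i : Fin k) (F : (Fin k → ℝ) → ℝ) : ℝ :=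
  ∫ y in {y : {j : Fin k // j ≠ i} → ℝ | ∀ j, 0 ≤ y j},
    (∫ s in Set.Ioi (0 : ℝ), F (fun j => if h : j = i then s else y ⟨j, h⟩)) ^ 2

/-- `M_k`, the supremum of `(∑ᵢ J_i(F))/I(F)` over square-integrable `F` supported
on the simplex `R_k` that are not almost everywhere zero. -/
noncomputable def Mquant (k : ℕ) : ℝ :=
  sSup {r : ℝ | ∃ F : (Fin k → ℝ) → ℝ, MemLp F 2 volume ∧
    (∀ t, t ∉ simplex k 1 → F t = 0) ∧ ¬ (F =ᵐ[volume] 0) ∧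
    r = (∑ i, sieveJ i F) / sieveI F}


/-- `J_{i,1-ε}(F)`: the outer integral is restricted to the scaled simplex
`(1-ε) · R_{k-1}` in the variables other than `t_i`. -/
noncomputable def sieveJE {k : ℕ} (ε : ℝ) (i : Fin k) (F : (Fin k → ℝ) → ℝ) : ℝ :=
  ∫ y in {y : {j : Fin k // j ≠ i} → ℝ | (∀ j, 0 ≤ y j) ∧ ∑ j, y j ≤ 1 - ε},
    (∫ s in Set.Ioi (0 : ℝ), F (fun j => if h : j = i then s else y ⟨j, h⟩)) ^ 2

/-- `M_{k,ε}`, the supremum of `(∑ᵢ J_{i,1-ε}(F))/I(F)` over square-integrable `F`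
supported on `(1+ε) · R_k` that are not almost everywhere zero. -/
noncomputable def MquantE (k : ℕ) (ε : ℝ) : ℝ :=
  sSup {r : ℝ | ∃ F : (Fin k → ℝ) → ℝ, MemLp F 2 volume ∧
    (∀ t, t ∉ simplex k (1 + ε) → F t = 0) ∧ ¬ (F =ᵐ[volume] 0) ∧
    r = (∑ i, sieveJE ε i F) / sieveI F}

/-- The numerical inequality for small `ε` (threshold `c = 1`). -/
lemma num_small (K ε σ : ℝ) (hK : 2 ≤ K) (hε : ε ≤ 1/3) (hσ : σ ≤ 1 - ε) :
    Real.log (1 + (K-1) * ((1-σ)/(1-σ))) / (K-1) + (1 + ε - 1 + 1/2 * σ) / K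
      ≤ Real.log (2*K-1) / (K-1) := by
  have hK1 : 0 < K - 1 := by linarith
  have hK0 : 0 < K := by linarith
  have h1 : Real.log (1 + (K-1) * ((1-σ)/(1-σ))) ≤ Real.log K := by
    have h0 : 0 ≤ (1-σ)/(1-σ) := by
      rcases eq_or_ne (1-σ) 0 with h | h
      · simp [h]
      · simp [div_self h]
    apply Real.log_le_log
    · nlinarith
    · have : (1-σ)/(1-σ) ≤ 1 := div_self_le_one _
      nlinarith
  have h2 : Real.log (2*K-1) = Real.log K + Real.log (1 + (1 - 1/K)) := by
    rw [← Real.log_mul hK0.ne']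
    · congr 1; field_simp; ring
    · have : 1/K ≤ 1 := by rw [div_le_one hK0]; linarith
      linarith
  have hv0 : 0 ≤ 1 - 1/K := by
    have : 1/K ≤ 1 := by rw [div_le_one hK0]; linarith
    linarith
  have hv1 : 1 - 1/K ≤ 1 := by
    have : 0 ≤ 1/K := by positivity
    linarith
  have h3 := Real.le_log_one_add_of_nonneg hv0
  have h4 : 2/3 * (1 - 1/K) ≤ 2 * (1 - 1/K) / ((1 - 1/K) + 2) := by
    rw [le_div_iff₀ (by linarith)]
    nlinarith
  have h5 : (1 + ε - 1 + 1/2 * σ) / K ≤ (2/3 * (1 - 1/K)) / (K-1) := by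
    have : (2/3 * (1 - 1/K)) / (K-1) = (2/3) / K := by field_simp
    rw [this]
    gcongr
    linarith
  calc _ ≤ Real.log K / (K-1) + (2/3 * (1 - 1/K)) / (K-1) := by gcongr
    _ = (Real.log K + 2/3 * (1 - 1/K)) / (K-1) := by ring
    _ ≤ _ := by
      rw [h2]; gcongr; linarith

lemma log_three_ge : (25:ℝ)/24 ≤ Real.log 3 := by
  rw [Real.le_log_iff_exp_le (by norm_num)]
  have h1 : Real.exp (25/24) = Real.exp 1 * Real.exp (1/24) := by
    rw [← Real.exp_add]; norm_num
  have h2 : Real.exp (1/24) ≤ 24/23 := by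
    have := Real.one_sub_le_exp_neg (1/24 : ℝ)
    rw [Real.exp_neg] at this
    have h3 := Real.exp_pos (1/24:ℝ)
    have h4 : (1 - 1/24) * Real.exp (1/24) ≤ 1 := by
      calc _ ≤ (Real.exp (1/24))⁻¹ * Real.exp (1/24) := by gcongr
        _ = 1 := inv_mul_cancel₀ h3.ne'
    linarith
  have h3 := Real.exp_one_lt_d9
  rw [h1]
  have h4 := Real.exp_pos (1/24:ℝ)
  nlinarith

/-- The numerical inequality for large `ε` (threshold `c = 1 - ε`). -/
lemma num_large (K ε σ : ℝ) (hK : 2 ≤ K) (hε : 1/3 ≤ ε) (h0 : 0 ≤ σ) (hσ : σ ≤ 1 - ε) :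
    Real.log (1 + (K-1) * ((1-ε-σ)/(1-σ))) / (K-1) + (1 + ε - (1-ε) + 1 * σ) / K
      ≤ Real.log (2*K-1) / (K-1) := by
  have hK1 : 0 < K - 1 := by linarith
  have hK0 : 0 < K := by linarith
  have hs : 0 < 1 - σ := by linarith
  obtain ⟨x, hx⟩ : ∃ x, x = (1-ε-σ)/(1-σ) := ⟨_, rfl⟩
  have hx0 : 0 ≤ x := by rw [hx]; apply div_nonneg <;> linarith
  have hxe : x * (1-σ) = 1-ε-σ := by rw [hx]; field_simp
  rw [← hx]
  have hP : 0 < 1 + (K-1)*x := by positivity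
  have h1 : Real.log (1 + (K-1)*x) ≤ Real.log (K/2) + ((1 + (K-1)*x)/(K/2) - 1) := by
    have := Real.log_le_sub_one_of_pos (show 0 < (1 + (K-1)*x)/(K/2) by positivity)
    rw [Real.log_div hP.ne' (by positivity)] at this
    linarith
  have h2 : Real.log (K/2) + Real.log 3 ≤ Real.log (2*K-1) := by
    rw [← Real.log_mul (by positivity) (by norm_num)]
    apply Real.log_le_log (by positivity)
    linarith
  have h3 := log_three_ge
  have he : σ * (2*x-1) ≤ 1/24 := by
    have : σ * (2*x-1) * (1-σ) ≤ 1/24 * (1-σ) := by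
      have e1 : σ * (2*x-1) * (1-σ) = σ * (2*(x*(1-σ)) - (1-σ)) := by ring
      rw [e1, hxe]
      nlinarith [sq_nonneg (σ - 9/48)]
    exact le_of_mul_le_mul_right this hs
  have h4 : (1 + (K-1)*x)/(K/2) - 1 + (K-1)/K * (1 + ε - (1-ε) + 1*σ) = 1 + (K-1)/K*(σ*(2*x-1)) := by
    have : ε = 1 - σ - x * (1-σ) := by linarith
    rw [this]
    field_simp
    ring
  have h5 : (K-1)/K*(σ*(2*x-1)) ≤ 1/24 := by
    have : (K-1)/K ≤ 1 := by rw [div_le_one hK0]; linarith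
    have h6 : 0 < (K-1)/K := by positivity
    nlinarith
  have h7 : (1 + ε - (1-ε) + 1 * σ) / K = ((K-1)/K * (1 + ε - (1-ε) + 1*σ)) / (K-1) := by
    field_simp
  rw [h7, ← add_div]
  gcongr
  linarith

lemma measurableSet_nonneg_pi (ι : Type*) [Fintype ι] :
    MeasurableSet {t : ι → ℝ | ∀ i, 0 ≤ t i} := by
  have : {t : ι → ℝ | ∀ i, 0 ≤ t i} = ⋂ i, {t : ι → ℝ | 0 ≤ t i} := by ext t; simp
  rw [this]
  exact MeasurableSet.iInter fun i => measurableSet_le measurable_const (measurable_pi_apply i)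

lemma measurableSet_simp (ι : Type*) [Fintype ι] (c : ℝ) :
    MeasurableSet {t : ι → ℝ | (∀ i, 0 ≤ t i) ∧ ∑ i, t i ≤ c} := by
  have h2 : MeasurableSet {t : ι → ℝ | ∑ i, t i ≤ c} :=
    measurableSet_le (by fun_prop) (by fun_prop)
  exact (measurableSet_nonneg_pi ι).inter h2

/-- Weighted Cauchy–Schwarz for lower Lebesgue integrals. -/
lemma weighted_cs {α : Type*} [MeasurableSpace α] (μ : Measure α) (f W : α → ENNReal)
    (hf : AEMeasurable f μ) (hW : AEMeasurable W μ)
    (h0 : ∀ᵐ a ∂μ, W a ≠ 0) (ht : ∀ᵐ a ∂μ, W a ≠ ⊤) :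
    (∫⁻ a, f a ∂μ) ^ 2 ≤ (∫⁻ a, (W a)⁻¹ ∂μ) * ∫⁻ a, f a ^ 2 * W a ∂μ := by
  have key := ENNReal.lintegral_mul_le_Lp_mul_Lq μ Real.HolderConjugate.two_two
    (f := fun a => (W a)⁻¹ ^ (1/2 : ℝ)) (g := fun a => f a * W a ^ (1/2 : ℝ))
    (hW.inv.pow_const _) (hf.mul (hW.pow_const _))
  have e1 : ∫⁻ a, ((fun a => (W a)⁻¹ ^ (1/2 : ℝ)) * (fun a => f a * W a ^ (1/2 : ℝ))) a ∂μ
      = ∫⁻ a, f a ∂μ := by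
    apply lintegral_congr_ae
    filter_upwards [h0, ht] with a ha hb
    simp only [Pi.mul_apply]
    rw [mul_comm, mul_assoc, ← ENNReal.mul_rpow_of_nonneg _ _ (by norm_num),
      ENNReal.mul_inv_cancel ha hb]
    simp
  have e2 : ∀ x : ENNReal, (x ^ (1/2 : ℝ)) ^ (2 : ℝ) = x := by
    intro x; rw [← ENNReal.rpow_mul]; norm_num
  rw [e1] at key
  have k2 := pow_le_pow_left₀ (zero_le) key 2
  refine k2.trans (le_of_eq ?_)
  rw [mul_pow]
  rw [← ENNReal.rpow_ofNat, ← ENNReal.rpow_ofNat, e2, e2]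
  congr 1
  · apply lintegral_congr; intro a; exact e2 _
  · apply lintegral_congr; intro a
    rw [ENNReal.mul_rpow_of_nonneg _ _ (by norm_num), e2, ENNReal.rpow_two]

/-- Insert the value `s` in coordinate `i`. -/
def glue {k : ℕ} (i : Fin k) (y : {j : Fin k // j ≠ i} → ℝ) (s : ℝ) : Fin k → ℝ :=
  fun j => if h : j = i then s else y ⟨j, h⟩

lemma glue_self {k : ℕ} (i : Fin k) (y : {j : Fin k // j ≠ i} → ℝ) (s : ℝ) :
    glue i y s i = s := by simp [glue]

lemma glue_ne {k : ℕ} (i : Fin k) (y : {j : Fin k // j ≠ i} → ℝ) (s : ℝ)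
    (j : {j : Fin k // j ≠ i}) : glue i y s j = y j := by
  simp [glue, j.2]

lemma glue_sum {k : ℕ} (i : Fin k) (y : {j : Fin k // j ≠ i} → ℝ) (s : ℝ) :
    ∑ j, glue i y s j = s + ∑ j, y j := by
  rw [Fintype.sum_eq_add_sum_subtype_ne _ i, glue_self]
  simp [glue_ne]

/-- Splitting off the coordinate `i`, as a measurable equivalence. -/
noncomputable def glueEquiv {k : ℕ} (i : Fin k) :
    (({j : Fin k // j ≠ i} → ℝ) × ℝ) ≃ᵐ (Fin k → ℝ) :=
  (MeasurableEquiv.prodComm.trans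
    (MeasurableEquiv.prodCongr (MeasurableEquiv.funUnique {j : Fin k // j = i} ℝ).symm
      (MeasurableEquiv.refl _))).trans
    (MeasurableEquiv.piEquivPiSubtypeProd (fun _ : Fin k => ℝ) (fun j => j = i)).symm

lemma glueEquiv_apply {k : ℕ} (i : Fin k) (p : ({j : Fin k // j ≠ i} → ℝ) × ℝ) :
    glueEquiv i p = glue i p.1 p.2 := by
  ext j
  by_cases h : j = i <;> simp [glueEquiv, glue, h, MeasurableEquiv.piEquivPiSubtypeProd] <;> rfl

lemma glue_mp {k : ℕ} (i : Fin k) :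
    MeasurePreserving (glueEquiv i) volume volume := by
  have h1 := (volume_preserving_piEquivPiSubtypeProd (fun _ : Fin k => ℝ) (fun j => j = i)).symm
  have h2 : MeasurePreserving (MeasurableEquiv.funUnique {j : Fin k // j = i} ℝ).symm
      volume (@volume _ (@MeasureSpace.pi {j : Fin k // j = i}
        (Subtype.fintype _) (fun _ => ℝ) _)) := by
    convert (volume_preserving_funUnique {j : Fin k // j = i} ℝ).symm
  have h3 := h2.prod (MeasurePreserving.id (volume : Measure ({j : Fin k // ¬ j = i} → ℝ)))
  have h4 := Measure.measurePreserving_swap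
    (μ := (volume : Measure ({j : Fin k // ¬ j = i} → ℝ))) (ν := (volume : Measure ℝ))
  have h5 := h1.comp (h3.comp h4)
  exact h5

/-- Polymath-style Schur test with general weights. -/
lemma schur_test {k : ℕ} (ε : ℝ) (C : ℝ) (hC : 0 ≤ C)
    (W : Fin k → (Fin k → ℝ) → ENNReal) (hWm : ∀ i, Measurable (W i))
    (hsum : ∀ t ∈ simplex k (1 + ε),
      ∑ i, (if ∑ j, t j - t i ≤ 1 - ε then W i t else 0) ≤ (k : ENNReal))
    (hW0 : ∀ i, ∀ y : {j : Fin k // j ≠ i} → ℝ, (∀ j, 0 ≤ y j) → ∑ j, y j ≤ 1 - ε →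
      ∀ s ∈ Set.Ioc 0 (1 + ε - ∑ j, y j), W i (glue i y s) ≠ 0 ∧ W i (glue i y s) ≠ ⊤)
    (hWi : ∀ i, ∀ y : {j : Fin k // j ≠ i} → ℝ, (∀ j, 0 ≤ y j) → ∑ j, y j ≤ 1 - ε →
      ∫⁻ s in Set.Ioc 0 (1 + ε - ∑ j, y j), (W i (glue i y s))⁻¹ ≤ ENNReal.ofReal C)
    (F : (Fin k → ℝ) → ℝ) (hF : MemLp F 2 volume)
    (hsupp : ∀ t, t ∉ simplex k (1 + ε) → F t = 0) :
    ∑ i, sieveJE ε i F ≤ C * k * sieveI F := by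
  -- measurability
  have hFm : AEStronglyMeasurable F volume := hF.1
  have hf : AEMeasurable (fun t => ‖F t‖ₑ) volume := hFm.enorm
  have hglue : ∀ i : Fin k, Measurable (fun p : ({j : Fin k // j ≠ i} → ℝ) × ℝ =>
      glue i p.1 p.2) := by
    intro i
    have := (glueEquiv i).measurable
    have h2 : (fun p : ({j : Fin k // j ≠ i} → ℝ) × ℝ => glue i p.1 p.2) = glueEquiv i := by
      funext p
      rw [glueEquiv_apply]
    rw [h2]
    exact this
  set g : Fin k → (Fin k → ℝ) → ENNReal := fun i t =>
    if ∑ j, t j - t i ≤ 1 - ε then ‖F t‖ₑ ^ 2 * W i t else 0 with hg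
  have hgm : ∀ i, AEMeasurable (g i) volume := by
    intro i
    have hS : MeasurableSet {t : Fin k → ℝ | ∑ j, t j - t i ≤ 1 - ε} :=
      measurableSet_le (by fun_prop) (by fun_prop)
    have := ((hf.pow_const 2).mul (hWm i).aemeasurable).indicator hS
    exact this
  have hJ : ∀ i, ENNReal.ofReal (sieveJE ε i F) ≤ ENNReal.ofReal C * ∫⁻ t, g i t := by
    intro i
    have hS : MeasurableSet {y : {j : Fin k // j ≠ i} → ℝ | (∀ j, 0 ≤ y j) ∧ ∑ j, y j ≤ 1 - ε} :=
      measurableSet_simp _ _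
    have hsec : ∀ᵐ y : {j : Fin k // j ≠ i} → ℝ,
        AEStronglyMeasurable (fun s => F (glue i y s)) volume := by
      have h1 : AEStronglyMeasurable (fun p : ({j : Fin k // j ≠ i} → ℝ) × ℝ =>
          F (glueEquiv i p)) (volume.prod volume) :=
        hFm.comp_measurePreserving (glue_mp i)
      have := h1.prodMk_left
      simpa only [glueEquiv_apply] using this
    have hfub : ∫⁻ t, g i t = ∫⁻ y : {j : Fin k // j ≠ i} → ℝ, ∫⁻ s, g i (glue i y s) := by
      rw [← (glue_mp i).lintegral_comp_emb (glueEquiv i).measurableEmbedding]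
      have : AEMeasurable (fun p => g i (glueEquiv i p)) (volume.prod volume) :=
        (hgm i).comp_quasiMeasurePreserving (glue_mp i).quasiMeasurePreserving
      have h2 := lintegral_prod _ this
      simp only [glueEquiv_apply] at h2 ⊢
      exact h2
    calc ENNReal.ofReal (sieveJE ε i F) ≤ ‖sieveJE ε i F‖ₑ := Real.ofReal_le_enorm _
      _ ≤ ∫⁻ y in {y : {j : Fin k // j ≠ i} → ℝ | (∀ j, 0 ≤ y j) ∧ ∑ j, y j ≤ 1 - ε},
          ‖(∫ s in Set.Ioi (0 : ℝ), F (glue i y s)) ^ 2‖ₑ :=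
        enorm_integral_le_lintegral_enorm _
      _ ≤ ∫⁻ y in {y : {j : Fin k // j ≠ i} → ℝ | (∀ j, 0 ≤ y j) ∧ ∑ j, y j ≤ 1 - ε},
          ENNReal.ofReal C * ∫⁻ s, g i (glue i y s) := by
        apply lintegral_mono_ae
        rw [ae_restrict_iff' hS]
        filter_upwards [hsec] with y hy hyS
        obtain ⟨hy0, hys⟩ := hyS
        rw [enorm_pow]
        have hI : ∫ s in Set.Ioi (0 : ℝ), F (glue i y s)
            = ∫ s in Set.Ioc 0 (1 + ε - ∑ j, y j), F (glue i y s) := by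
          apply setIntegral_eq_of_subset_of_forall_sdiff_eq_zero measurableSet_Ioi
            Set.Ioc_subset_Ioi_self
          intro s hs
          apply hsupp
          intro hmem
          have := hmem.2
          rw [glue_sum] at this
          exact hs.2 ⟨hs.1, by linarith⟩
        rw [hI]
        have hcs := weighted_cs (volume.restrict (Set.Ioc 0 (1 + ε - ∑ j, y j)))
          (fun s => ‖F (glue i y s)‖ₑ) (fun s => W i (glue i y s)) hy.enorm.restrict
          ((hWm i).comp ((hglue i).comp measurable_prodMk_left)).aemeasurable
          ((ae_restrict_iff' measurableSet_Ioc).2 (ae_of_all _ fun s hs => (hW0 i y hy0 hys s hs).1))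
          ((ae_restrict_iff' measurableSet_Ioc).2 (ae_of_all _ fun s hs => (hW0 i y hy0 hys s hs).2))
        calc _ ≤ (∫⁻ s in Set.Ioc 0 (1 + ε - ∑ j, y j), ‖F (glue i y s)‖ₑ) ^ 2 := by
              gcongr
              exact enorm_integral_le_lintegral_enorm _
          _ ≤ _ := hcs
          _ ≤ _ := by
            refine mul_le_mul' (hWi i y hy0 hys) ?_
            · refine le_trans (le_of_eq ?_) (setLIntegral_le_lintegral (Set.Ioc 0 (1 + ε - ∑ j, y j)) _)
              apply lintegral_congr
              intro s
              have : ∑ j, glue i y s j - glue i y s i ≤ 1 - ε := by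
                rw [glue_sum, glue_self]; linarith
              simp only [hg, this, if_true]
      _ ≤ ∫⁻ y : {j : Fin k // j ≠ i} → ℝ, ENNReal.ofReal C * ∫⁻ s, g i (glue i y s) :=
        setLIntegral_le_lintegral _ _
      _ = ENNReal.ofReal C * ∫⁻ t, g i t := by
        rw [lintegral_const_mul' _ _ ENNReal.ofReal_ne_top, hfub]
  have hJ0 : ∀ i, 0 ≤ sieveJE ε i F := fun i => integral_nonneg fun y => sq_nonneg _
  have hI0 : 0 ≤ sieveI F := integral_nonneg fun y => sq_nonneg _
  have hIe : ENNReal.ofReal (sieveI F) = ∫⁻ t in {t : Fin k → ℝ | ∀ i, 0 ≤ t i}, ‖F t‖ₑ ^ 2 := by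
    unfold sieveI
    rw [ofReal_integral_eq_lintegral_ofReal hF.integrable_sq.restrict
      (ae_of_all _ fun t => sq_nonneg _)]
    apply lintegral_congr
    intro t
    rw [← enorm_pow, Real.enorm_of_nonneg (sq_nonneg _)]
  have hpos : MeasurableSet {t : Fin k → ℝ | ∀ i, 0 ≤ t i} := measurableSet_nonneg_pi _
  have hfin : ∑ i, ∫⁻ t, g i t ≤ k * ENNReal.ofReal (sieveI F) := by
    rw [← lintegral_finsetSum' _ (fun i _ => hgm i), hIe,
      ← lintegral_const_mul' _ _ (ENNReal.natCast_ne_top k), ← lintegral_indicator hpos]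
    apply lintegral_mono
    intro t
    by_cases ht : t ∈ simplex k (1 + ε)
    · have h1 : t ∈ {t : Fin k → ℝ | ∀ i, 0 ≤ t i} := ht.1
      simp only [Set.indicator_of_mem h1]
      have h2 : ∑ i, g i t = ‖F t‖ₑ ^ 2 *
          ∑ i, (if ∑ j, t j - t i ≤ 1 - ε then W i t else 0) := by
        rw [Finset.mul_sum]
        apply Finset.sum_congr rfl
        intro i _
        simp only [hg]
        split_ifs <;> simp
      rw [h2, mul_comm]
      gcongr
      exact hsum t ht
    · simp [hg, hsupp t ht]
  rw [← ENNReal.ofReal_le_ofReal_iff (by positivity), ENNReal.ofReal_sum_of_nonneg (fun i _ => hJ0 i)]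
  calc ∑ i, ENNReal.ofReal (sieveJE ε i F) ≤ ∑ i, ENNReal.ofReal C * ∫⁻ t, g i t :=
        Finset.sum_le_sum fun i _ => hJ i
    _ = ENNReal.ofReal C * ∑ i, ∫⁻ t, g i t := by rw [Finset.mul_sum]
    _ ≤ ENNReal.ofReal C * (k * ENNReal.ofReal (sieveI F)) := by gcongr
    _ = _ := by
      rw [ENNReal.ofReal_mul (by positivity), ENNReal.ofReal_mul hC, ENNReal.ofReal_natCast, mul_assoc]

/-- The number of admissible coordinates. -/
noncomputable def cnt {k : ℕ} (ε : ℝ) (t : Fin k → ℝ) : ENNReal :=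
  ∑ i, (if ∑ j, t j - t i ≤ 1 - ε then 1 else 0)

/-- The weights: linear below the threshold `c`, uniform on admissible coordinates above. -/
noncomputable def wt {k : ℕ} (ε c : ℝ) (i : Fin k) (t : Fin k → ℝ) : ENNReal :=
  if ∑ j, t j ≤ c then ENNReal.ofReal (1 - ∑ j, t j + k * t i) else k * (cnt ε t)⁻¹

lemma cnt_measurable {k : ℕ} (ε : ℝ) : Measurable (cnt (k := k) ε) := by
  unfold cnt
  apply Finset.measurable_sum
  intro i _
  apply Measurable.ite _ measurable_const measurable_const
  exact measurableSet_le (by fun_prop) (by fun_prop)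

lemma wt_measurable {k : ℕ} (ε c : ℝ) (i : Fin k) : Measurable (wt ε c i) := by
  unfold wt
  apply Measurable.ite
  · exact measurableSet_le (by fun_prop) (by fun_prop)
  · exact ENNReal.measurable_ofReal.comp (by fun_prop)
  · exact (cnt_measurable ε).inv.const_mul _

lemma cnt_ne_top {k : ℕ} (ε : ℝ) (t : Fin k → ℝ) : cnt ε t ≠ ⊤ := by
  unfold cnt
  apply ENNReal.sum_ne_top.2
  intro i _
  split_ifs <;> simp

lemma wt_sum {k : ℕ} (ε c : ℝ) (hc : c ≤ 1) (t : Fin k → ℝ) (ht : t ∈ simplex k (1 + ε)) :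
    ∑ i, (if ∑ j, t j - t i ≤ 1 - ε then wt ε c i t else 0) ≤ (k : ENNReal) := by
  by_cases h : ∑ j, t j ≤ c
  · calc _ ≤ ∑ i, ENNReal.ofReal (1 - ∑ j, t j + k * t i) := by
          apply Finset.sum_le_sum
          intro i _
          simp only [wt, h, if_true]
          split_ifs <;> simp
      _ = ENNReal.ofReal (∑ i, (1 - ∑ j, t j + k * t i)) := by
          rw [ENNReal.ofReal_sum_of_nonneg]
          intro i _
          have := ht.1 i
          have h2 : 0 ≤ (k:ℝ) * t i := by positivity
          linarith
      _ = k := by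
          rw [Finset.sum_add_distrib, ← Finset.mul_sum]
          simp only [Finset.sum_const, Finset.card_univ, Fintype.card_fin, nsmul_eq_mul]
          rw [← ENNReal.ofReal_natCast]
          congr 1
          ring
  · have : ∀ i, (if ∑ j, t j - t i ≤ 1 - ε then wt ε c i t else 0)
        = (if ∑ j, t j - t i ≤ 1 - ε then 1 else 0) * (k * (cnt ε t)⁻¹) := by
      intro i
      simp only [wt, h, if_false]
      split_ifs <;> simp
    simp only [this]
    rw [← Finset.sum_mul]
    change cnt ε t * _ ≤ _
    calc _ = k * (cnt ε t * (cnt ε t)⁻¹) := by ring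
      _ ≤ k * 1 := by gcongr; exact ENNReal.mul_inv_le_one _
      _ = k := mul_one _

lemma cnt_ne_zero {k : ℕ} (ε : ℝ) (t : Fin k → ℝ) (i : Fin k) (h : ∑ j, t j - t i ≤ 1 - ε) :
    cnt ε t ≠ 0 := by
  unfold cnt
  rw [Ne, Finset.sum_eq_zero_iff]
  intro h2
  have := h2 i (Finset.mem_univ i)
  simp [h] at this

lemma wt_ne {k : ℕ} (hk : 2 ≤ k) (ε c : ℝ) (hε : 0 ≤ ε) (i : Fin k)
    (y : {j : Fin k // j ≠ i} → ℝ) (hys : ∑ j, y j ≤ 1 - ε)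
    (s : ℝ) (hs : 0 < s) : wt ε c i (glue i y s) ≠ 0 ∧ wt ε c i (glue i y s) ≠ ⊤ := by
  have hk' : (2:ℝ) ≤ k := by exact_mod_cast hk
  unfold wt
  split_ifs with h
  · refine ⟨?_, ENNReal.ofReal_ne_top⟩
    rw [Ne, ENNReal.ofReal_eq_zero, not_le, glue_sum, glue_self]
    nlinarith
  · have h1 : cnt ε (glue i y s) ≠ 0 := by
      apply cnt_ne_zero _ _ i
      rw [glue_sum, glue_self]; linarith
    have hk0 : (k : ENNReal) ≠ 0 := by
      have : k ≠ 0 := by omega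
      exact_mod_cast this
    refine ⟨mul_ne_zero hk0 (ENNReal.inv_ne_zero.2 (cnt_ne_top _ _)), ?_⟩
    exact ENNReal.mul_ne_top (ENNReal.natCast_ne_top k) (ENNReal.inv_ne_top.2 h1)

lemma first_part (K c σ : ℝ) (hK : 2 ≤ K) (hc : c ≤ 1) (hσ : σ ≤ c) :
    ∫⁻ s in Set.Ioc 0 (c - σ), (ENNReal.ofReal (1 - σ + (K-1) * s))⁻¹
      ≤ ENNReal.ofReal (Real.log (1 + (K-1) * ((c-σ)/(1-σ))) / (K-1)) := by
  rcases eq_or_lt_of_le hσ with h | h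
  · subst h; simp
  have h1 : 0 < 1 - σ := by linarith
  have hK1 : 0 < K - 1 := by linarith
  have hpos : ∀ s ∈ Set.Icc 0 (c-σ), 0 < 1 - σ + (K-1)*s := by
    intro s hs
    have := mul_nonneg hK1.le hs.1
    linarith
  have hd : ∀ s ∈ Set.uIcc 0 (c-σ),
      HasDerivAt (fun s => Real.log (1 - σ + (K-1)*s) / (K-1)) ((1 - σ + (K-1)*s)⁻¹) s := by
    intro s hs
    rw [Set.uIcc_of_le (by linarith)] at hs
    have hp := hpos s hs
    have h2 : HasDerivAt (fun s => 1 - σ + (K-1)*s) (K-1) s := by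
      simpa using ((hasDerivAt_id s).const_mul (K-1)).const_add (1-σ)
    have h3 := (h2.log hp.ne').div_const (K-1)
    have h4 : (1 - σ + (K-1)*s)⁻¹ = (K-1) / (1 - σ + (K-1)*s) / (K-1) := by
      field_simp
    rw [h4]
    exact h3
  have hcont : ContinuousOn (fun s => (1 - σ + (K-1)*s)⁻¹) (Set.uIcc 0 (c-σ)) := by
    rw [Set.uIcc_of_le (by linarith)]
    apply ContinuousOn.inv₀ (by fun_prop)
    intro s hs
    exact (hpos s hs).ne'
  have hdint := intervalIntegral.integral_eq_sub_of_hasDerivAt hd hcont.intervalIntegrable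
  rw [intervalIntegral.integral_of_le (by linarith)] at hdint
  have hii : IntegrableOn (fun s => (1 - σ + (K-1)*s)⁻¹) (Set.Ioc 0 (c-σ)) := by
    have := hcont.intervalIntegrable (μ := volume)
    rwa [intervalIntegrable_iff_integrableOn_Ioc_of_le (by linarith)] at this
  have e : ∫⁻ s in Set.Ioc 0 (c - σ), (ENNReal.ofReal (1 - σ + (K-1) * s))⁻¹
      = ∫⁻ s in Set.Ioc 0 (c - σ), ENNReal.ofReal ((1 - σ + (K-1) * s)⁻¹) := by
    apply setLIntegral_congr_fun measurableSet_Ioc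
    intro s hs
    simp only
    rw [ENNReal.ofReal_inv_of_pos (hpos s ⟨hs.1.le, hs.2⟩)]
  rw [e, ← ofReal_integral_eq_lintegral_ofReal hii, hdint]
  · apply ENNReal.ofReal_le_ofReal
    apply le_of_eq
    rw [← sub_div, ← Real.log_div (hpos _ ⟨by linarith, le_rfl⟩).ne' (by simpa using h1.ne')]
    congr 2
    field_simp
    ring
  · rw [Filter.EventuallyLE, ae_restrict_iff' measurableSet_Ioc]
    exact ae_of_all _ fun s hs => (inv_pos.2 (hpos s ⟨hs.1.le, hs.2⟩)).le

lemma second_part {k : ℕ} (ε c lam : ℝ) (hlam : 0 ≤ lam) (hc1 : c ≤ 1) (hε : 0 ≤ ε)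
    (hmin : ∀ τ, 0 ≤ τ → min (τ + (1 - ε)) (1 + ε) - c ≤ lam * τ) (i : Fin k)
    (y : {j : Fin k // j ≠ i} → ℝ) (hy0 : ∀ j, 0 ≤ y j) :
    ∫⁻ s in Set.Ioc (c - ∑ j, y j) (1 + ε - ∑ j, y j), cnt ε (glue i y s)
      ≤ ENNReal.ofReal (1 + ε - c + lam * ∑ j, y j) := by
  unfold cnt
  rw [lintegral_finsetSum']
  swap
  · intro j _
    refine (Measurable.ite ?_ measurable_const measurable_const).aemeasurable
    have h1 : Measurable (fun s => glue i y s) := by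
      have h2 : (fun s => glue i y s) = fun s => glueEquiv i (y, s) := by
        funext s; rw [glueEquiv_apply]
      rw [h2]
      exact (glueEquiv i).measurable.comp measurable_prodMk_left
    simp only [glue_sum]
    exact measurableSet_le ((by fun_prop : Measurable fun s : ℝ => s + ∑ j, y j).sub
      ((measurable_pi_apply j).comp h1)) measurable_const
  rw [Fintype.sum_eq_add_sum_subtype_ne _ i]
  have hlen : 0 ≤ 1 + ε - c := by linarith
  rw [Finset.mul_sum, ENNReal.ofReal_add hlen (Finset.sum_nonneg fun j _ => mul_nonneg hlam (hy0 j)),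
    ENNReal.ofReal_sum_of_nonneg (fun j _ => mul_nonneg hlam (hy0 j))]
  apply add_le_add
  · calc _ ≤ ∫⁻ s in Set.Ioc (c - ∑ j, y j) (1 + ε - ∑ j, y j), 1 := by
          apply lintegral_mono
          intro s
          simp only
          split_ifs <;> simp
      _ = _ := by
          rw [setLIntegral_one, Real.volume_Ioc]
          congr 1; ring
  · apply Finset.sum_le_sum
    intro j _
    simp only [glue_sum, glue_ne]
    set σ := ∑ j, y j with hσ
    calc _ ≤ ∫⁻ s, (Set.Ioc (c - σ) (min (y j + (1-ε)) (1+ε) - σ)).indicator 1 s := by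
          rw [← lintegral_indicator measurableSet_Ioc]
          apply lintegral_mono
          intro s
          simp only [Set.indicator_apply, Set.mem_Ioc, Pi.one_apply]
          split_ifs with h1 h2 h3 <;> simp
          refine absurd ⟨h1.1, ?_⟩ h3
          rw [le_sub_iff_add_le, le_min_iff]
          constructor <;> linarith [h1.2]
      _ = ENNReal.ofReal (min (y j + (1-ε)) (1+ε) - c) := by
          rw [lintegral_indicator_one measurableSet_Ioc, Real.volume_Ioc]
          congr 1; ring
      _ ≤ _ := ENNReal.ofReal_le_ofReal (hmin _ (hy0 j))

lemma line_bound {k : ℕ} (hk : 2 ≤ k) (ε c lam : ℝ) (hlam : 0 ≤ lam) (hc1 : c ≤ 1) (hε : 0 ≤ ε)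
    (hcη : 1 - ε ≤ c)
    (hmin : ∀ τ, 0 ≤ τ → min (τ + (1 - ε)) (1 + ε) - c ≤ lam * τ)
    (hnum : ∀ σ, 0 ≤ σ → σ ≤ 1 - ε →
      Real.log (1 + ((k:ℝ)-1) * ((c-σ)/(1-σ))) / ((k:ℝ)-1) + (1 + ε - c + lam * σ) / k
      ≤ Real.log (2*k-1) / ((k:ℝ)-1)) (i : Fin k)
    (y : {j : Fin k // j ≠ i} → ℝ) (hy0 : ∀ j, 0 ≤ y j) (hys : ∑ j, y j ≤ 1 - ε) :
    ∫⁻ s in Set.Ioc 0 (1 + ε - ∑ j, y j), (wt ε c i (glue i y s))⁻¹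
      ≤ ENNReal.ofReal (Real.log (2*k-1) / ((k:ℝ)-1)) := by
  have hk' : (2:ℝ) ≤ k := by exact_mod_cast hk
  have hk0 : (k : ENNReal) ≠ 0 := by
    have : k ≠ 0 := by omega
    exact_mod_cast this
  have hσ0 : 0 ≤ ∑ j, y j := Finset.sum_nonneg fun j _ => hy0 j
  have hfp := first_part k c (∑ j, y j) hk' hc1 (hys.trans hcη)
  have hsp := second_part ε c lam hlam hc1 hε hmin i y hy0
  have hn := hnum _ hσ0 hys
  set σ := ∑ j, y j with hσ
  have hU : Set.Ioc 0 (1 + ε - σ) = Set.Ioc 0 (c - σ) ∪ Set.Ioc (c - σ) (1 + ε - σ) := by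
    rw [Set.Ioc_union_Ioc_eq_Ioc] <;> linarith
  rw [hU]
  refine (lintegral_union_le _ _ _).trans ?_
  have e1 : ∫⁻ s in Set.Ioc 0 (c - σ), (wt ε c i (glue i y s))⁻¹
      = ∫⁻ s in Set.Ioc 0 (c - σ), (ENNReal.ofReal (1 - σ + ((k:ℝ)-1) * s))⁻¹ := by
    apply setLIntegral_congr_fun measurableSet_Ioc
    intro s hs
    have h1 : s + σ ≤ c := by linarith [hs.2]
    simp only [wt, glue_sum, glue_self, ← hσ, h1, if_true]
    congr 2
    ring
  have e2 : ∫⁻ s in Set.Ioc (c - σ) (1 + ε - σ), (wt ε c i (glue i y s))⁻¹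
      = (k : ENNReal)⁻¹ * ∫⁻ s in Set.Ioc (c - σ) (1 + ε - σ), cnt ε (glue i y s) := by
    rw [← lintegral_const_mul' _ _ (ENNReal.inv_ne_top.2 hk0)]
    apply setLIntegral_congr_fun measurableSet_Ioc
    intro s hs
    have h1 : ¬ (s + σ ≤ c) := by linarith [hs.1]
    simp only [wt, glue_sum, ← hσ, h1, if_false]
    rw [ENNReal.mul_inv (Or.inl hk0) (Or.inl (ENNReal.natCast_ne_top k)), inv_inv]
  rw [e1, e2]
  have hkr : (k : ENNReal)⁻¹ = ENNReal.ofReal ((k:ℝ)⁻¹) := by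
    rw [ENNReal.ofReal_inv_of_pos (by linarith), ENNReal.ofReal_natCast]
  have hlog : 0 ≤ Real.log (1 + ((k:ℝ)-1) * ((c-σ)/(1-σ))) / ((k:ℝ)-1) := by
    apply div_nonneg _ (by linarith)
    apply Real.log_nonneg
    have : 0 ≤ (c-σ)/(1-σ) := div_nonneg (by linarith) (by linarith)
    nlinarith
  calc _ ≤ ENNReal.ofReal (Real.log (1 + ((k:ℝ)-1) * ((c-σ)/(1-σ))) / ((k:ℝ)-1))
        + ENNReal.ofReal ((k:ℝ)⁻¹) * ENNReal.ofReal (1 + ε - c + lam * σ) := by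
        rw [hkr]; gcongr
    _ = ENNReal.ofReal (Real.log (1 + ((k:ℝ)-1) * ((c-σ)/(1-σ))) / ((k:ℝ)-1)
          + (1 + ε - c + lam * σ) / k) := by
        have h3 : 0 ≤ 1 + ε - c + lam * σ := by
          have := mul_nonneg hlam hσ0
          linarith
        rw [← ENNReal.ofReal_mul (by positivity), ← ENNReal.ofReal_add hlog (by positivity)]
        congr 2
        ring
    _ ≤ _ := ENNReal.ofReal_le_ofReal hn

lemma sum_bound (k : ℕ) (hk : 2 ≤ k) (ε : ℝ) (hε0 : 0 ≤ ε)
    (F : (Fin k → ℝ) → ℝ) (hF : MemLp F 2 volume)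
    (hsupp : ∀ t, t ∉ simplex k (1 + ε) → F t = 0) :
    ∑ i, sieveJE ε i F ≤ (k : ℝ) / ((k : ℝ) - 1) * Real.log (2 * k - 1) * sieveI F := by
  have hk' : (2:ℝ) ≤ k := by exact_mod_cast hk
  have hC : 0 ≤ Real.log (2*k-1) / ((k:ℝ)-1) :=
    div_nonneg (Real.log_nonneg (by linarith)) (by linarith)
  have e : (k : ℝ) / ((k : ℝ) - 1) * Real.log (2 * k - 1)
      = Real.log (2*k-1) / ((k:ℝ)-1) * k := by ring
  rw [e]
  rcases le_total ε (1/3) with h | h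
  · refine schur_test ε _ hC (wt ε 1) (wt_measurable ε 1) (wt_sum ε 1 le_rfl)
      (fun i y _ hys s hs => wt_ne hk ε 1 hε0 i y hys s hs.1) (fun i y hy0 hys =>
        line_bound hk ε 1 (1/2) (by norm_num) le_rfl hε0 (by linarith) ?_ ?_ i y hy0 hys) F hF hsupp
    · intro τ hτ
      have h1 := min_le_left (τ + (1 - ε)) (1 + ε)
      have h2 := min_le_right (τ + (1 - ε)) (1 + ε)
      linarith
    · intro σ _ hσ
      exact num_small k ε σ hk' h hσ
  · refine schur_test ε _ hC (wt ε (1-ε)) (wt_measurable ε _) (wt_sum ε _ (by linarith))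
      (fun i y _ hys s hs => wt_ne hk ε _ hε0 i y hys s hs.1) (fun i y hy0 hys =>
        line_bound hk ε (1-ε) 1 (by norm_num) (by linarith) hε0 le_rfl ?_ ?_ i y hy0 hys) F hF hsupp
    · intro τ hτ
      have h1 := min_le_left (τ + (1 - ε)) (1 + ε)
      linarith
    · intro σ h0 hσ
      exact num_large k ε σ hk' h h0 hσ

/-- **Polymath8b, Proposition 6.5**: `M_{k,ε} ≤ (k/(k-1)) log(2k-1)` for `k ≥ 2` and
`0 ≤ ε < 1`; equivalently, `∑ᵢ J_{i,1-ε}(F) ≤ (k/(k-1)) log(2k-1) · I(F)` for every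
square-integrable `F` supported on `(1+ε) · R_k`. -/
theorem MkE_upper_bound (k : ℕ) (hk : 2 ≤ k) (ε : ℝ) (hε0 : 0 ≤ ε) (hε1 : ε < 1) :
    MquantE k ε ≤ (k : ℝ) / ((k : ℝ) - 1) * Real.log (2 * k - 1) ∧
    ∀ F : (Fin k → ℝ) → ℝ, MemLp F 2 volume →
      (∀ t, t ∉ simplex k (1 + ε) → F t = 0) →
      ∑ i, sieveJE ε i F ≤ (k : ℝ) / ((k : ℝ) - 1) * Real.log (2 * k - 1) * sieveI F := by
  have hk' : (2:ℝ) ≤ k := by exact_mod_cast hk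
  refine ⟨?_, fun F hF hsupp => sum_bound k hk ε hε0 F hF hsupp⟩
  have hB : 0 ≤ (k : ℝ) / ((k : ℝ) - 1) * Real.log (2 * k - 1) :=
    mul_nonneg (div_nonneg (by linarith) (by linarith)) (Real.log_nonneg (by linarith))
  unfold MquantE
  apply Real.sSup_le _ hB
  rintro r ⟨F, hF, hsupp, -, rfl⟩
  have h := sum_bound k hk ε hε0 F hF hsupp
  have hI0 : 0 ≤ sieveI F := integral_nonneg fun y => sq_nonneg _
  exact div_le_of_le_mul₀ hI0 hB h
end

section
/- There exists an absolute constant C > 0 such that M_k ≥ log k − C for all integers k ≥ C. -/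
open MeasureTheory

/-- The one-dimensional weight. -/
noncomputable def gW (k T : ℝ) : ℝ → ℝ := Set.indicator (Set.Icc 0 T) (fun t => (T + k * t)⁻¹)

lemma gW_nonneg {k T : ℝ} (hk : 0 < k) (hT : 0 < T) (t : ℝ) : 0 ≤ gW k T t := by
  unfold gW
  apply Set.indicator_nonneg
  intro x hx
  have := hx.1
  positivity

lemma gW_meas (k T : ℝ) : Measurable (gW k T) := by
  unfold gW
  apply Measurable.indicator _ measurableSet_Icc
  fun_prop

lemma gW_neg {k T t : ℝ} (h : t < 0) : gW k T t = 0 := by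
  unfold gW
  apply Set.indicator_of_notMem
  intro hx
  exact absurd hx.1 (not_le.mpr h)

lemma gW_mul (k T : ℝ) (n : ℕ) (hn : n ≠ 0) (h : ℝ → ℝ) :
    (fun t => h t * gW k T t ^ n) =
      Set.indicator (Set.Icc 0 T) (fun t => h t * ((T + k * t)⁻¹) ^ n) := by
  funext t
  unfold gW
  by_cases ht : t ∈ Set.Icc 0 T
  · simp [ht]
  · simp [ht, hn]

lemma gW_cont {k T : ℝ} (hk : 0 < k) (hT : 0 < T) (n : ℕ) (h : ℝ → ℝ) (hh : Continuous h) :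
    ContinuousOn (fun t => h t * ((T + k * t)⁻¹) ^ n) (Set.Icc 0 T) := by
  apply hh.continuousOn.mul
  apply ContinuousOn.pow
  apply ContinuousOn.inv₀
  · fun_prop
  · intro x hx
    have := hx.1
    positivity

lemma gW_integrable {k T : ℝ} (hk : 0 < k) (hT : 0 < T) (n : ℕ) (hn : n ≠ 0) (h : ℝ → ℝ)
    (hh : Continuous h) : Integrable (fun t => h t * gW k T t ^ n) := by
  rw [gW_mul k T n hn h, integrable_indicator_iff measurableSet_Icc]
  exact (gW_cont hk hT n h hh).integrableOn_Icc

lemma gW_integral {k T : ℝ} (hT : 0 < T) (n : ℕ) (hn : n ≠ 0) (h : ℝ → ℝ) :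
    ∫ t, h t * gW k T t ^ n = ∫ t in (0:ℝ)..T, h t * ((T + k * t)⁻¹) ^ n := by
  rw [gW_mul k T n hn h, integral_indicator measurableSet_Icc, integral_Icc_eq_integral_Ioc,
    intervalIntegral.integral_of_le hT.le]

lemma gW_ftc {k T : ℝ} (hk : 0 < k) (hT : 0 < T) (n : ℕ) (hn : n ≠ 0) (h : ℝ → ℝ)
    (hh : Continuous h) (H : ℝ → ℝ)
    (hH : ∀ t, 0 ≤ t → HasDerivAt H (h t * ((T + k * t)⁻¹) ^ n) t) :
    ∫ t, h t * gW k T t ^ n = H T - H 0 := by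
  rw [gW_integral hT n hn h]
  apply intervalIntegral.integral_eq_sub_of_hasDerivAt
  · intro x hx
    rw [Set.uIcc_of_le hT.le] at hx
    exact hH x hx.1
  · apply ContinuousOn.intervalIntegrable
    rw [Set.uIcc_of_le hT.le]
    exact gW_cont hk hT n h hh

lemma gW_lin_deriv (k T t : ℝ) : HasDerivAt (fun t => T + k * t) k t := by
  simpa using ((hasDerivAt_id t).const_mul k).const_add T

lemma gW_log_sub {k T : ℝ} (hk : 0 < k) (hT : 0 < T) :
    Real.log (T + k * T) = Real.log (1 + k) + Real.log T := by
  rw [← Real.log_mul (by positivity) (by positivity)]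
  congr 1
  ring

lemma gW_int1 {k T : ℝ} (hk : 0 < k) (hT : 0 < T) :
    ∫ t, gW k T t = Real.log (1 + k) / k := by
  have := gW_ftc hk hT 1 one_ne_zero (fun _ => 1) continuous_const
    (fun t => Real.log (T + k * t) / k) (by
      intro t ht
      have h0 : T + k * t ≠ 0 := by positivity
      have := ((gW_lin_deriv k T t).log h0).div_const k
      refine this.congr_deriv ?_
      field_simp)
  simp only [one_mul, pow_one] at this
  rw [this, gW_log_sub hk hT]
  simp
  ring

lemma gW_int2 {k T : ℝ} (hk : 0 < k) (hT : 0 < T) :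
    ∫ t, gW k T t ^ 2 = 1 / (T * (1 + k)) := by
  have := gW_ftc hk hT 2 two_ne_zero (fun _ => 1) continuous_const
    (fun t => - ((T + k * t)⁻¹ / k)) (by
      intro t ht
      have h0 : T + k * t ≠ 0 := by positivity
      have := (((gW_lin_deriv k T t).inv h0).div_const k).neg
      refine this.congr_deriv ?_
      field_simp)
  simp only [one_mul] at this
  rw [this]
  have h1 : T + k * T ≠ 0 := by positivity
  have h2 : 1 + k ≠ 0 := by positivity
  have h3 : T + k * T = T * (1 + k) := by ring
  simp only [h3, mul_zero, add_zero]
  field_simp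
  ring

lemma gW_int3 {k T : ℝ} (hk : 0 < k) (hT : 0 < T) :
    ∫ t, t * gW k T t ^ 2 = (Real.log (1 + k) + 1 / (1 + k) - 1) / k ^ 2 := by
  have := gW_ftc hk hT 2 two_ne_zero (fun t => t) continuous_id
    (fun t => (Real.log (T + k * t) + T * (T + k * t)⁻¹) / k ^ 2) (by
      intro t ht
      have h0 : T + k * t ≠ 0 := by positivity
      have := (((gW_lin_deriv k T t).log h0).add
        (((gW_lin_deriv k T t).inv h0).const_mul T)).div_const (k ^ 2)
      refine this.congr_deriv ?_
      field_simp
      ring)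
  rw [this, gW_log_sub hk hT]
  have h2 : 1 + k ≠ 0 := by positivity
  have h3 : T + k * T = T * (1 + k) := by ring
  simp only [h3, mul_zero, add_zero]
  field_simp
  ring

lemma gW_mul_le {k T : ℝ} (hk : 0 < k) (hT : 0 < T) (t : ℝ) : t * gW k T t ≤ 1 / k := by
  unfold gW
  by_cases ht : t ∈ Set.Icc 0 T
  · have := ht.1
    simp only [ht, Set.indicator_of_mem]
    rw [← div_eq_mul_inv, div_le_div_iff₀ (by positivity) hk]
    nlinarith
  · simp [ht]
    positivity

lemma gW_int_le {T B : ℝ} (hT : 0 < T) (f : ℝ → ℝ) (hf : Integrable f)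
    (h0 : ∀ t, t ∉ Set.Icc 0 T → f t = 0) (hB : ∀ t, f t ≤ B) : ∫ t, f t ≤ T * B := by
  rw [← setIntegral_eq_integral_of_forall_compl_eq_zero h0]
  have : ∫ t in Set.Icc 0 T, f t ≤ ∫ t in Set.Icc 0 T, B :=
    setIntegral_mono hf.integrableOn (by simp) hB
  simpa [hT.le] using this

lemma gW_int4 {k T : ℝ} (hk : 0 < k) (hT : 0 < T) :
    ∫ t, t ^ 2 * gW k T t ^ 2 ≤ T / k ^ 2 := by
  have := gW_int_le (B := 1 / k ^ 2) hT (fun t => t ^ 2 * gW k T t ^ 2)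
    (gW_integrable hk hT 2 two_ne_zero _ (by fun_prop))
    (by intro t ht; simp [gW, ht])
    (by
      intro t
      have h1 := gW_mul_le hk hT t
      have h2 : 0 ≤ t * gW k T t := by
        rcases lt_or_ge t 0 with h | h
        · simp [gW_neg h]
        · exact mul_nonneg h (gW_nonneg hk hT t)
      have := pow_le_pow_left₀ h2 h1 2
      simpa [mul_pow, div_pow] using this)
  simpa [div_eq_mul_inv] using this

lemma gW_int5 {k T : ℝ} (hk : 0 < k) (hT : 0 < T) :
    ∫ t, t * gW k T t ≤ T / k := by
  have := gW_int_le (B := 1 / k) hT (fun t => t * gW k T t)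
    (by simpa using gW_integrable hk hT 1 one_ne_zero (fun t => t) (by fun_prop))
    (by intro t ht; simp [gW, ht])
    (gW_mul_le hk hT)
  simpa [div_eq_mul_inv] using this

/-- Splitting off one coordinate. -/
noncomputable def splitE {k : ℕ} (i : Fin k) : (Fin k → ℝ) ≃ᵐ ℝ × ({j : Fin k // j ≠ i} → ℝ) :=
  (MeasurableEquiv.piEquivPiSubtypeProd (fun _ => ℝ) (fun j : Fin k => j = i)).trans
    ((MeasurableEquiv.funUnique {j : Fin k // j = i} ℝ).prodCongr (MeasurableEquiv.refl _))

lemma splitE_mp {k : ℕ} (i : Fin k) : MeasurePreserving (splitE i) := by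
  unfold splitE
  have h1 := volume_preserving_piEquivPiSubtypeProd (fun _ : Fin k => ℝ) (fun j : Fin k => j = i)
  have h3 : MeasurePreserving (MeasurableEquiv.funUnique {j : Fin k // j = i} ℝ) := by
    convert volume_preserving_funUnique {j : Fin k // j = i} ℝ <;> rfl
  have h2 := h3.prod
    (MeasurePreserving.id (volume : Measure ({j : Fin k // ¬ j = i} → ℝ)))
  have h4 : MeasurePreserving (MeasurableEquiv.piEquivPiSubtypeProd (fun _ : Fin k => ℝ)
      (fun j : Fin k => j = i)) volume (volume.prod volume) := by
    convert h1
    · rfl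
    · rw [Measure.volume_eq_prod]
      congr!
  exact h2.comp h4

lemma splitE_symm {k : ℕ} (i : Fin k) (s : ℝ) (y : {j : Fin k // j ≠ i} → ℝ) :
    (splitE i).symm (s, y) = (fun j => if h : j = i then s else y ⟨j, h⟩) := by
  rfl

lemma split_integral {k : ℕ} (i : Fin k) (f : (Fin k → ℝ) → ℝ) (hf : Integrable f) :
    Integrable (fun z : ℝ × ({j : Fin k // j ≠ i} → ℝ) =>
      f (fun j => if h : j = i then z.1 else z.2 ⟨j, h⟩)) ∧
    ∫ t, f t = ∫ y : {j : Fin k // j ≠ i} → ℝ, ∫ s : ℝ,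
      f (fun j => if h : j = i then s else y ⟨j, h⟩) := by
  have hmp := (splitE_mp i).symm
  have h1 : Integrable (fun z : ℝ × ({j : Fin k // j ≠ i} → ℝ) =>
      f (fun j => if h : j = i then z.1 else z.2 ⟨j, h⟩)) := by
    have := hmp.integrable_comp_of_integrable hf
    exact this
  refine ⟨h1, ?_⟩
  rw [← hmp.integral_comp' f]
  exact integral_prod_symm _ h1

lemma sq_integral_le (f : ℝ → ℝ) (h0 : ∀ t, t ∉ Set.Icc (0:ℝ) 1 → f t = 0)
    (hf : Integrable (fun t => f t ^ 2)) :
    (∫ s in Set.Ioi (0 : ℝ), f s) ^ 2 ≤ ∫ s, f s ^ 2 := by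
  have e0 : ∫ s in Set.Ioi (0 : ℝ), f s = ∫ s in Set.Icc (0:ℝ) 1, f s := by
    rw [setIntegral_eq_integral_of_forall_compl_eq_zero h0, ← integral_Ici_eq_integral_Ioi]
    apply setIntegral_eq_integral_of_forall_compl_eq_zero
    intro x hx
    apply h0
    intro h
    exact hx h.1
  have e1 : ∫ s, f s ^ 2 = ∫ s in Set.Icc (0:ℝ) 1, f s ^ 2 := by
    rw [setIntegral_eq_integral_of_forall_compl_eq_zero]
    intro x hx
    simp [h0 x hx]
  rw [e0, e1]
  by_cases hi : IntegrableOn f (Set.Icc (0:ℝ) 1)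
  · set A := ∫ s in Set.Icc (0:ℝ) 1, f s with hA
    have h2 : 0 ≤ ∫ s in Set.Icc (0:ℝ) 1, (f s - A) ^ 2 :=
      integral_nonneg (fun _ => sq_nonneg _)
    have h3 : ∫ s in Set.Icc (0:ℝ) 1, (f s - A) ^ 2
        = (∫ s in Set.Icc (0:ℝ) 1, f s ^ 2) - 2 * A * A + A ^ 2 := by
      have : ∀ s, (f s - A) ^ 2 = f s ^ 2 - 2 * A * f s + A ^ 2 := by intro s; ring
      simp_rw [this]
      rw [integral_add, integral_sub, integral_const_mul]
      · simp [hA]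
      · exact hf.integrableOn
      · exact hi.const_mul _
      · exact hf.integrableOn.sub (hi.const_mul _)
      · simp
    nlinarith
  · rw [integral_undef hi]
    simp only [ne_eq, OfNat.ofNat_ne_zero, not_false_eq_true, zero_pow]
    exact integral_nonneg (fun _ => sq_nonneg _)

lemma sieveI_eq {k : ℕ} (F : (Fin k → ℝ) → ℝ) (h0 : ∀ t, t ∉ simplex k 1 → F t = 0) :
    sieveI F = ∫ t, F t ^ 2 := by
  unfold sieveI
  apply setIntegral_eq_integral_of_forall_compl_eq_zero
  intro t ht
  rw [h0 t]
  · simp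
  · intro h
    exact ht h.1

lemma simplex_coord {k : ℕ} {t : Fin k → ℝ} (h : t ∈ simplex k 1) (i : Fin k) :
    t i ∈ Set.Icc (0:ℝ) 1 :=
  ⟨h.1 i, (Finset.single_le_sum (fun j _ => h.1 j) (Finset.mem_univ i)).trans h.2⟩

lemma sieveJ_le {k : ℕ} (F : (Fin k → ℝ) → ℝ) (hF : MemLp F 2 volume)
    (h0 : ∀ t, t ∉ simplex k 1 → F t = 0) (i : Fin k) : sieveJ i F ≤ sieveI F := by
  have hint : Integrable (fun t => F t ^ 2) := hF.integrable_sq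
  obtain ⟨h1, h2⟩ := split_integral i _ hint
  rw [sieveI_eq F h0, h2]
  unfold sieveJ
  have h3 : Integrable (fun y : {j : Fin k // j ≠ i} → ℝ => ∫ s : ℝ,
      F (fun j => if h : j = i then s else y ⟨j, h⟩) ^ 2) := h1.integral_prod_right
  refine le_trans ?_ (setIntegral_le_integral h3
    (s := {y : {j : Fin k // j ≠ i} → ℝ | ∀ j, 0 ≤ y j}) ?_)
  · apply integral_mono_of_nonneg
    · exact Filter.Eventually.of_forall (fun _ => sq_nonneg _)
    · exact h3.integrableOn
    · apply ae_restrict_of_ae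
      filter_upwards [h1.prod_left_ae] with y hy
      apply sq_integral_le _ _ hy
      intro t ht
      apply h0
      intro h
      have := simplex_coord h i
      simp at this
      exact ht this
  · exact Filter.Eventually.of_forall (fun y => integral_nonneg (fun _ => sq_nonneg _))

lemma Mquant_ge {k : ℕ} (F : (Fin k → ℝ) → ℝ) (hF : MemLp F 2 volume)
    (h0 : ∀ t, t ∉ simplex k 1 → F t = 0) (hI : 0 < sieveI F) :
    (∑ i, sieveJ i F) / sieveI F ≤ Mquant k := by
  apply le_csSup
  · refine ⟨k, ?_⟩
    rintro r ⟨F, hF, h0, -, rfl⟩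
    have hn : 0 ≤ sieveI F := by
      rw [sieveI_eq F h0]
      exact integral_nonneg (fun _ => sq_nonneg _)
    apply div_le_of_le_mul₀ hn (by positivity)
    calc _ ≤ ∑ i : Fin k, sieveI F := Finset.sum_le_sum (fun i _ => sieveJ_le F hF h0 i)
      _ = _ := by simp
  · refine ⟨F, hF, h0, ?_, rfl⟩
    intro h
    rw [sieveI_eq F h0] at hI
    have : ∫ t, F t ^ 2 = 0 := by
      apply integral_eq_zero_of_ae
      filter_upwards [h] with t ht
      simp [ht]
    linarith

section variance
variable {ι : Type*} [Fintype ι] [DecidableEq ι]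

lemma var_term (p : ℝ → ℝ) (μ : ℝ) (h0 : Integrable p)
    (h1 : Integrable (fun t => (t - μ) * p t)) (h2 : Integrable (fun t => (t - μ) ^ 2 * p t))
    (hz : ∫ t, (t - μ) * p t = 0) (j l : ι) :
    Integrable (fun y : ι → ℝ => (y j - μ) * (y l - μ) * ∏ i, p (y i)) ∧
    ∫ y : ι → ℝ, (y j - μ) * (y l - μ) * ∏ i, p (y i) =
      if j = l then (∫ t, (t - μ) ^ 2 * p t) * (∫ t, p t) ^ (Fintype.card ι - 1) else 0 := by
  let f : ι → ℝ → ℝ := fun i t =>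
    ((if i = j then (t - μ) else 1) * (if i = l then (t - μ) else 1)) * p t
  have hf : (fun y : ι → ℝ => (y j - μ) * (y l - μ) * ∏ i, p (y i))
      = fun y => ∏ i, f i (y i) := by
    funext y
    simp only [f, Finset.prod_mul_distrib, Finset.prod_ite_eq', Finset.mem_univ, if_true]
  have hfi : ∀ i, Integrable (f i) := by
    intro i
    by_cases hj : i = j <;> by_cases hl : i = l
    · subst hj
      simpa [f, ← hl, pow_two] using h2
    · subst hj
      simpa [f, hl] using h1
    · subst hl
      simpa [f, hj] using h1
    · simpa [f, hj, hl] using h0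
  rw [hf]
  refine ⟨Integrable.fintype_prod hfi, ?_⟩
  rw [integral_fintype_prod_volume_eq_prod]
  split_ifs with h
  · subst h
    rw [← Finset.mul_prod_erase _ _ (Finset.mem_univ j)]
    congr 1
    · simp [f, pow_two]
    · rw [Finset.prod_congr rfl (g := fun _ => ∫ t, p t)]
      · simp [Finset.card_erase_of_mem]
      · intro x hx
        have := Finset.ne_of_mem_erase hx
        simp [f, this]
  · apply Finset.prod_eq_zero (Finset.mem_univ j)
    simpa [f, h] using hz

lemma var_sum (p : ℝ → ℝ) (μ : ℝ) (h0 : Integrable p)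
    (h1 : Integrable (fun t => (t - μ) * p t)) (h2 : Integrable (fun t => (t - μ) ^ 2 * p t))
    (hz : ∫ t, (t - μ) * p t = 0) :
    Integrable (fun y : ι → ℝ => (∑ j, (y j - μ)) ^ 2 * ∏ i, p (y i)) ∧
    ∫ y : ι → ℝ, (∑ j, (y j - μ)) ^ 2 * ∏ i, p (y i) =
      Fintype.card ι * ((∫ t, (t - μ) ^ 2 * p t) * (∫ t, p t) ^ (Fintype.card ι - 1)) := by
  have hf : (fun y : ι → ℝ => (∑ j, (y j - μ)) ^ 2 * ∏ i, p (y i))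
      = fun y => ∑ j, ∑ l, (y j - μ) * (y l - μ) * ∏ i, p (y i) := by
    funext y
    rw [pow_two, Finset.sum_mul_sum, Finset.sum_mul]
    simp_rw [Finset.sum_mul]
  have hi := fun j l => var_term (ι := ι) p μ h0 h1 h2 hz j l
  rw [hf]
  refine ⟨integrable_finsetSum _ fun j _ => integrable_finsetSum _ fun l _ => (hi j l).1, ?_⟩
  rw [integral_finsetSum _ fun j _ => integrable_finsetSum _ fun l _ => (hi j l).1]
  simp_rw [integral_finsetSum _ fun l _ => (hi _ l).1, (hi _ _).2]
  simp

end variance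

/-- The Lipschitz cutoff. -/
noncomputable def wW (T s : ℝ) : ℝ := max 0 (min 1 ((1 - s) / T))

lemma wW_nonneg (T s : ℝ) : 0 ≤ wW T s := le_max_left _ _

lemma wW_le_one (T s : ℝ) : wW T s ≤ 1 := max_le zero_le_one (min_le_left _ _)

lemma wW_cont (T : ℝ) : Continuous (wW T) := by
  unfold wW
  fun_prop

lemma wW_one {T s : ℝ} (hT : 0 < T) (hs : s ≤ 1 - T) : wW T s = 1 := by
  unfold wW
  have : 1 ≤ (1 - s) / T := by
    rw [le_div_iff₀ hT]
    linarith
  rw [min_eq_left this]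
  simp

lemma wW_zero {T s : ℝ} (hT : 0 < T) (hs : 1 ≤ s) : wW T s = 0 := by
  unfold wW
  have : (1 - s) / T ≤ 0 := div_nonpos_of_nonpos_of_nonneg (by linarith) hT.le
  exact max_eq_left ((min_le_right _ _).trans this)

lemma wW_anti {T s t : ℝ} (hT : 0 < T) (ht : 0 ≤ t) : wW T (t + s) ≤ wW T s := by
  unfold wW
  gcongr
  linarith

lemma wW_lip {T s t : ℝ} (hT : 0 < T) (ht : 0 ≤ t) : wW T s - t / T ≤ wW T (t + s) := by
  unfold wW
  have h0 : 0 ≤ t / T := by positivity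
  have h1 : (1 - (t + s)) / T = (1 - s) / T - t / T := by ring
  rw [h1]
  generalize t / T = a at *
  generalize (1 - s) / T = b at *
  rcases max_cases 0 (min 1 b) with ⟨h, _⟩ | ⟨h, _⟩ <;>
  rcases max_cases 0 (min 1 (b - a)) with ⟨h', _⟩ | ⟨h', _⟩ <;>
  rcases min_cases 1 b with ⟨h2, _⟩ | ⟨h2, _⟩ <;>
  rcases min_cases 1 (b - a) with ⟨h3, _⟩ | ⟨h3, _⟩ <;> linarith

lemma gP_integrable {ι : Type*} [Fintype ι] {k T : ℝ} (hk : 0 < k) (hT : 0 < T) :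
    Integrable (fun y : ι → ℝ => ∏ i, gW k T (y i) ^ 2) := by
  apply Integrable.fintype_prod (f := fun _ t => gW k T t ^ 2)
  intro i
  simpa using gW_integrable hk hT 2 two_ne_zero (fun _ => 1) continuous_const

lemma gP_bdd_integrable {ι : Type*} [Fintype ι] {k T : ℝ} (hk : 0 < k) (hT : 0 < T)
    (f : (ι → ℝ) → ℝ) (hf : Measurable f) (B : ℝ) (hB : ∀ y, |f y| ≤ B) :
    Integrable (fun y : ι → ℝ => f y * ∏ i, gW k T (y i) ^ 2) :=
  (gP_integrable hk hT).bdd_mul (c := B) hf.aestronglyMeasurable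
    (Filter.Eventually.of_forall hB)

lemma A_lower {ι : Type*} [Fintype ι] {k : ℕ} (hk : 1 ≤ k)
    (hc : Fintype.card ι + 1 = k) {T : ℝ} (hT : T = 1 / (Real.log (1 + k) + 3)) :
    (1 / (T * (1 + k))) ^ (Fintype.card ι) / 2 ≤
      ∫ y : ι → ℝ, wW T (∑ i, y i) ^ 2 * ∏ i, gW k T (y i) ^ 2 := by
  classical
  have hkr : (1:ℝ) ≤ k := by exact_mod_cast hk
  have hk0 : (0:ℝ) < k := by linarith
  have hL0 : 0 ≤ Real.log (1 + k) := Real.log_nonneg (by linarith)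
  have hLk : Real.log (1 + k) ≤ k := by
    have := Real.log_le_sub_one_of_pos (show (0:ℝ) < 1 + k by linarith)
    linarith
  have hT0 : 0 < T := by rw [hT]; positivity
  have hTL : T * Real.log (1 + k) + 3 * T = 1 := by
    rw [hT]; field_simp
  set L := Real.log (1 + (k:ℝ)) with hL
  set m : ℝ := 1 / (T * (1 + k)) with hm
  have hm0 : 0 < m := by positivity
  have i2 : ∫ t, gW k T t ^ 2 = m := gW_int2 hk0 hT0
  have i3 := gW_int3 hk0 hT0
  have i4 := gW_int4 hk0 hT0
  set μ : ℝ := (∫ t, t * gW k T t ^ 2) / m with hμ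
  have hM1 : ∫ t, t * gW k T t ^ 2 = μ * m := by rw [hμ]; field_simp
  have hn : (Fintype.card ι : ℝ) = k - 1 := by
    rw [← hc]; push_cast; ring
  have hμv : μ = T * ((1 + k) * L - k) / k ^ 2 := by
    rw [hμ, i3, hm]
    field_simp
    ring
  have hμ0 : 0 ≤ μ := by
    rw [hμ]
    apply div_nonneg _ hm0.le
    apply integral_nonneg
    intro t
    rcases lt_or_ge t 0 with h | h
    · simp [gW_neg h]
    · simp only [Pi.zero_apply]; positivity
  have hmean : (Fintype.card ι : ℝ) * μ + 2 * T ≤ 1 - T := by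
    have h1 : (Fintype.card ι : ℝ) * μ ≤ k * μ := by
      apply mul_le_mul_of_nonneg_right _ hμ0
      linarith
    have h2 : k * μ ≤ T * L := by
      have : k * μ = T * (((1 + k) * L - k) / k) := by
        rw [hμv]; field_simp
      rw [this]
      apply mul_le_mul_of_nonneg_left _ hT0.le
      rw [div_le_iff₀ hk0]
      linarith
    linarith
  have g0 : Integrable (fun t => gW k T t ^ 2) := by
    simpa using gW_integrable hk0 hT0 2 two_ne_zero (fun _ => 1) continuous_const
  have g1 : Integrable (fun t => t * gW k T t ^ 2) :=
    gW_integrable hk0 hT0 2 two_ne_zero (fun t => t) (by fun_prop)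
  have g2 : Integrable (fun t => t ^ 2 * gW k T t ^ 2) :=
    gW_integrable hk0 hT0 2 two_ne_zero (fun t => t ^ 2) (by fun_prop)
  have hz : ∫ t, (t - μ) * gW k T t ^ 2 = 0 := by
    simp_rw [sub_mul]
    rw [integral_sub g1 (g0.const_mul μ), integral_const_mul, i2, hM1, sub_self]
  have hv : ∫ t, (t - μ) ^ 2 * gW k T t ^ 2 ≤ T / k ^ 2 := by
    have e : ∀ t, (t - μ) ^ 2 * gW k T t ^ 2 =
      t ^ 2 * gW k T t ^ 2 - 2 * μ * (t * gW k T t ^ 2) + μ ^ 2 * gW k T t ^ 2 := by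
      intro t; ring
    simp_rw [e]
    have g3 : Integrable (fun t => t ^ 2 * gW k T t ^ 2 - 2 * μ * (t * gW k T t ^ 2)) :=
      g2.sub (g1.const_mul _)
    rw [integral_add g3 (g0.const_mul _),
      integral_sub g2 (g1.const_mul _), integral_const_mul, integral_const_mul, i2, hM1]
    have : 0 ≤ μ ^ 2 * m := by positivity
    nlinarith
  obtain ⟨v1, v2⟩ := var_sum (ι := ι) (fun t => gW k T t ^ 2) μ g0
    (gW_integrable hk0 hT0 2 two_ne_zero (fun t => t - μ) (by fun_prop))
    (gW_integrable hk0 hT0 2 two_ne_zero (fun t => (t - μ) ^ 2) (by fun_prop)) hz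
  have hP := gP_integrable (ι := ι) hk0 hT0
  have hPi : ∫ y : ι → ℝ, ∏ i, gW k T (y i) ^ 2 = m ^ Fintype.card ι := by
    rw [integral_fintype_prod_volume_eq_pow (fun t => gW k T t ^ 2), i2]
  have key : ∫ y : ι → ℝ, (∏ i, gW k T (y i) ^ 2 -
      1 / (4 * T ^ 2) * ((∑ j, (y j - μ)) ^ 2 * ∏ i, gW k T (y i) ^ 2)) ≤
      ∫ y : ι → ℝ, wW T (∑ i, y i) ^ 2 * ∏ i, gW k T (y i) ^ 2 := by
    apply integral_mono
    · exact hP.sub (v1.const_mul _)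
    · apply gP_bdd_integrable hk0 hT0 _ _ 1
      · intro y
        rw [abs_of_nonneg (sq_nonneg _)]
        exact pow_le_one₀ (wW_nonneg _ _) (wW_le_one _ _)
      · have := (wW_cont T).measurable
        fun_prop
    · intro y
      have hPn : 0 ≤ ∏ i, gW k T (y i) ^ 2 := Finset.prod_nonneg fun i _ => sq_nonneg _
      have : 1 - 1 / (4 * T ^ 2) * (∑ j, (y j - μ)) ^ 2 ≤ wW T (∑ i, y i) ^ 2 := by
        rcases le_or_gt (∑ i, y i) (1 - T) with h | h
        · rw [wW_one hT0 h]
          have : 0 ≤ 1 / (4 * T ^ 2) * (∑ j, (y j - μ)) ^ 2 := by positivity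
          linarith
        · have h1 : 2 * T ≤ ∑ j, (y j - μ) := by
            simp only [Finset.sum_sub_distrib, Finset.sum_const, Finset.card_univ, nsmul_eq_mul]
            linarith
          have h2 : 4 * T ^ 2 ≤ (∑ j, (y j - μ)) ^ 2 := by nlinarith
          have h3 : 1 ≤ 1 / (4 * T ^ 2) * (∑ j, (y j - μ)) ^ 2 := by
            rw [one_div, ← div_eq_inv_mul, le_div_iff₀ (by positivity)]
            linarith
          have := sq_nonneg (wW T (∑ i, y i))
          linarith
      have := mul_le_mul_of_nonneg_right this hPn
      simp only [Pi.sub_apply]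
      linarith
  refine le_trans ?_ key
  rw [integral_sub hP (v1.const_mul _), integral_const_mul, v2, hPi, i2]
  rcases Nat.eq_zero_or_pos (Fintype.card ι) with h | h
  · rw [h]; norm_num
  obtain ⟨n, hn'⟩ := Nat.exists_eq_succ_of_ne_zero h.ne'
  rw [hn'] at hn ⊢
  simp only [Nat.succ_eq_add_one, Nat.add_sub_cancel]
  simp only [Nat.succ_eq_add_one] at hn
  rw [hn]
  set v := ∫ t, (t - μ) ^ 2 * gW k T t ^ 2 with hvdef
  have hfin : 1 / (4 * T ^ 2) * ((k - 1) * v) ≤ m / 2 := by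
    calc _ ≤ 1 / (4 * T ^ 2) * ((k - 1) * (T / k ^ 2)) := by
          gcongr
      _ ≤ m / 2 := by
          rw [hm]
          have : 1 / (T * (1 + (k:ℝ))) / 2 - 1 / (4 * T ^ 2) * ((k - 1) * (T / k ^ 2))
            = (k ^ 2 + 1) / (4 * T * k ^ 2 * (1 + k)) := by
            field_simp
            ring
          have h2 : 0 ≤ ((k:ℝ) ^ 2 + 1) / (4 * T * k ^ 2 * (1 + k)) := by positivity
          linarith
  have hmn : 0 ≤ m ^ n := by positivity
  have := mul_le_mul_of_nonneg_right hfin hmn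
  rw [pow_succ]
  linarith

lemma dite_sum {k : ℕ} (i : Fin k) (s : ℝ) (y : {j : Fin k // j ≠ i} → ℝ) :
    ∑ j, (if h : j = i then s else y ⟨j, h⟩) = s + ∑ j, y j := by
  rw [Fintype.sum_eq_add_sum_subtype_ne _ i]
  congr 1
  · simp
  · exact Finset.sum_congr rfl fun j _ => dif_neg j.2

lemma dite_prod {k : ℕ} (φ : ℝ → ℝ) (i : Fin k) (s : ℝ) (y : {j : Fin k // j ≠ i} → ℝ) :
    ∏ j, φ (if h : j = i then s else y ⟨j, h⟩) = φ s * ∏ j, φ (y j) := by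
  rw [Fintype.prod_eq_mul_prod_subtype_ne _ i]
  congr 1
  · simp
  · exact Finset.prod_congr rfl fun j _ => by rw [dif_neg j.2]

/-- The test function. -/
noncomputable def FW (k : ℕ) (T : ℝ) (t : Fin k → ℝ) : ℝ :=
  wW T (∑ i, t i) * ∏ i, gW k T (t i)

lemma FW_split {k : ℕ} (T : ℝ) (i : Fin k) (s : ℝ) (y : {j : Fin k // j ≠ i} → ℝ) :
    FW k T (fun j => if h : j = i then s else y ⟨j, h⟩) =
      (∏ j, gW k T (y j)) * (wW T (s + ∑ j, y j) * gW k T s) := by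
  unfold FW
  rw [dite_sum, dite_prod]
  ring

lemma FW_supp {k : ℕ} {T : ℝ} (hT : 0 < T) (t : Fin k → ℝ) (ht : t ∉ simplex k 1) :
    FW k T t = 0 := by
  unfold FW
  by_cases h : ∀ i, 0 ≤ t i
  · rw [wW_zero hT, zero_mul]
    by_contra h2
    exact ht ⟨h, by linarith⟩
  · push Not at h
    obtain ⟨i, hi⟩ := h
    rw [Finset.prod_eq_zero (Finset.mem_univ i) (gW_neg hi), mul_zero]

lemma FW_meas (k : ℕ) (T : ℝ) : Measurable (FW k T) := by
  unfold FW
  have := (wW_cont T).measurable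
  have := gW_meas k T
  fun_prop

lemma FW_sq_int {k : ℕ} (hk : 1 ≤ k) {T : ℝ} (hT : 0 < T) :
    Integrable (fun t => FW k T t ^ 2) := by
  have hk0 : (0:ℝ) < k := by exact_mod_cast hk
  unfold FW
  simp_rw [mul_pow, ← Finset.prod_pow]
  apply gP_bdd_integrable hk0 hT _ _ 1
  · intro y
    rw [abs_of_nonneg (sq_nonneg _)]
    exact pow_le_one₀ (wW_nonneg _ _) (wW_le_one _ _)
  · have := (wW_cont T).measurable
    fun_prop

lemma FW_memLp {k : ℕ} (hk : 1 ≤ k) {T : ℝ} (hT : 0 < T) : MemLp (FW k T) 2 volume :=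
  (memLp_two_iff_integrable_sq (FW_meas k T).aestronglyMeasurable).2 (FW_sq_int hk hT)

lemma FW_I {k : ℕ} (hk : 1 ≤ k) {T : ℝ} (hT : 0 < T) (i : Fin k) :
    sieveI (FW k T) ≤ 1 / (T * (1 + k)) * ∫ y : {j : Fin k // j ≠ i} → ℝ,
      wW T (∑ j, y j) ^ 2 * ∏ j, gW k T (y j) ^ 2 := by
  have hk0 : (0:ℝ) < k := by exact_mod_cast hk
  obtain ⟨h1, h2⟩ := split_integral i _ (FW_sq_int hk hT)
  rw [sieveI_eq _ (FW_supp hT), h2, ← integral_const_mul]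
  have g0 : Integrable (fun t => gW k T t ^ 2) := by
    simpa using gW_integrable hk0 hT 2 two_ne_zero (fun _ => 1) continuous_const
  apply integral_mono_of_nonneg
  · exact Filter.Eventually.of_forall fun y => integral_nonneg fun s => sq_nonneg _
  · apply Integrable.const_mul
    apply gP_bdd_integrable hk0 hT _ _ 1
    · intro y
      rw [abs_of_nonneg (sq_nonneg _)]
      exact pow_le_one₀ (wW_nonneg _ _) (wW_le_one _ _)
    · have := (wW_cont T).measurable
      fun_prop
  · refine Filter.Eventually.of_forall fun y => ?_
    simp only [FW_split]
    rw [← gW_int2 hk0 hT, mul_comm, ← integral_const_mul]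
    apply integral_mono_of_nonneg
    · exact Filter.Eventually.of_forall fun s => sq_nonneg _
    · exact g0.const_mul _
    · refine Filter.Eventually.of_forall fun s => ?_
      simp only [Finset.prod_pow]
      rcases lt_or_ge s 0 with h | h
      · simp [gW_neg h]
      · have h3 := pow_le_pow_left₀ (wW_nonneg T _) (wW_anti (s := ∑ j, y j) hT h) 2
        have h4 : 0 ≤ (∏ j, gW k T (y j)) ^ 2 * gW k T s ^ 2 := by positivity
        have := mul_le_mul_of_nonneg_right h3 h4
        calc _ = _ := by ring
          _ ≤ _ := this
          _ = _ := by ring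

lemma X_lower {k : ℝ} (hk : 0 < k) {T : ℝ} (hT : 0 < T) (σ : ℝ) :
    wW T σ * (Real.log (1 + k) / k) - 1 / k ≤ ∫ s, wW T (s + σ) * gW k T s ∧
    0 ≤ ∫ s, wW T (s + σ) * gW k T s ∧
    ∫ s, wW T (s + σ) * gW k T s ≤ Real.log (1 + k) / k := by
  have g0 : Integrable (gW k T) := by
    simpa using gW_integrable hk hT 1 one_ne_zero (fun _ => 1) continuous_const
  have g1 : Integrable (fun t => t * gW k T t) := by
    simpa using gW_integrable hk hT 1 one_ne_zero (fun t => t) (by fun_prop)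
  have gw : Integrable (fun s => wW T (s + σ) * gW k T s) := by
    have := wW_cont T
    simpa using gW_integrable hk hT 1 one_ne_zero (fun s => wW T (s + σ)) (by fun_prop)
  have i5 := gW_int5 hk hT
  refine ⟨?_, ?_, ?_⟩
  · have : ∫ s, (wW T σ * gW k T s - 1 / T * (s * gW k T s)) ≤
        ∫ s, wW T (s + σ) * gW k T s := by
      apply integral_mono ((g0.const_mul _).sub (g1.const_mul _)) gw
      intro s
      simp only [Pi.sub_apply]
      rcases lt_or_ge s 0 with h | h
      · simp [gW_neg h]
      · have := mul_le_mul_of_nonneg_right (wW_lip (s := σ) hT h) (gW_nonneg hk hT s)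
        calc _ = _ := by ring
          _ ≤ _ := this
    rw [integral_sub (g0.const_mul _) (g1.const_mul _), integral_const_mul, integral_const_mul,
      gW_int1 hk hT] at this
    have h2 : 1 / T * ∫ s, s * gW k T s ≤ 1 / T * (T / k) := by gcongr
    have h3 : 1 / T * (T / k) = 1 / k := by field_simp
    linarith
  · exact integral_nonneg fun s => mul_nonneg (wW_nonneg _ _) (gW_nonneg hk hT _)
  · rw [← gW_int1 hk hT]
    apply integral_mono gw g0
    intro s
    exact mul_le_of_le_one_left (gW_nonneg hk hT s) (wW_le_one _ _)

lemma FW_J {k : ℕ} (hk : 1 ≤ k) {T : ℝ} (hT : T = 1 / (Real.log (1 + k) + 3)) (i : Fin k) :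
    ((Real.log (1 + k) / k) ^ 2 - 4 * (Real.log (1 + k) / k) / k) *
      (∫ y : {j : Fin k // j ≠ i} → ℝ, wW T (∑ j, y j) ^ 2 * ∏ j, gW k T (y j) ^ 2)
      ≤ sieveJ i (FW k T) := by
  have hkr : (1:ℝ) ≤ k := by exact_mod_cast hk
  have hk0 : (0:ℝ) < k := by linarith
  have hL0 : 0 ≤ Real.log (1 + k) := Real.log_nonneg (by linarith)
  have hT0 : 0 < T := by rw [hT]; positivity
  have hA := A_lower (ι := {j : Fin k // j ≠ i}) hk (by simp; omega) hT
  set A := ∫ y : {j : Fin k // j ≠ i} → ℝ, wW T (∑ j, y j) ^ 2 * ∏ j, gW k T (y j) ^ 2 with hAd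
  set G := Real.log (1 + (k:ℝ)) / k with hG
  have hG0 : 0 ≤ G := by positivity
  set X : ℝ → ℝ := fun σ => ∫ s, wW T (s + σ) * gW k T s with hX
  have hXm : Measurable X := by
    have : Measurable (fun p : ℝ × ℝ => wW T (p.2 + p.1) * gW k T p.2) := by
      have := (wW_cont T).measurable
      have := gW_meas k T
      fun_prop
    exact (this.stronglyMeasurable.integral_prod_right').measurable
  have hJ : sieveJ i (FW k T) = ∫ y : {j : Fin k // j ≠ i} → ℝ,
      X (∑ j, y j) ^ 2 * ∏ j, gW k T (y j) ^ 2 := by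
    unfold sieveJ
    have : ∀ y : {j : Fin k // j ≠ i} → ℝ, (∫ s in Set.Ioi (0 : ℝ),
        FW k T (fun j => if h : j = i then s else y ⟨j, h⟩)) ^ 2 =
        X (∑ j, y j) ^ 2 * ∏ j, gW k T (y j) ^ 2 := by
      intro y
      simp_rw [FW_split]
      rw [integral_const_mul, ← integral_Ici_eq_integral_Ioi,
        setIntegral_eq_integral_of_forall_compl_eq_zero, mul_pow, Finset.prod_pow, mul_comm]
      intro s hs
      rw [gW_neg (by simpa using hs), mul_zero]
    simp_rw [this]
    apply setIntegral_eq_integral_of_forall_compl_eq_zero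
    intro y hy
    simp only [Set.mem_ofPred_eq, not_forall, not_le] at hy
    obtain ⟨j, hj⟩ := hy
    rw [Finset.prod_eq_zero (Finset.mem_univ j), mul_zero]
    simp [gW_neg hj]
  have hw : Integrable (fun y : {j : Fin k // j ≠ i} → ℝ =>
      wW T (∑ j, y j) ^ 2 * ∏ j, gW k T (y j) ^ 2) := by
    apply gP_bdd_integrable hk0 hT0 _ _ 1
    · intro y
      rw [abs_of_nonneg (sq_nonneg _)]
      exact pow_le_one₀ (wW_nonneg _ _) (wW_le_one _ _)
    · have := (wW_cont T).measurable
      fun_prop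
  have hP := gP_integrable (ι := {j : Fin k // j ≠ i}) hk0 hT0
  have hPi : ∫ y : {j : Fin k // j ≠ i} → ℝ, ∏ i, gW k T (y i) ^ 2 =
      (1 / (T * (1 + k))) ^ Fintype.card {j : Fin k // j ≠ i} := by
    rw [integral_fintype_prod_volume_eq_pow (fun t => gW k T t ^ 2), gW_int2 hk0 hT0]
  have hmain : ∫ y : {j : Fin k // j ≠ i} → ℝ,
      (G ^ 2 * (wW T (∑ j, y j) ^ 2 * ∏ j, gW k T (y j) ^ 2) -
        2 * G / k * ∏ j, gW k T (y j) ^ 2) ≤ sieveJ i (FW k T) := by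
    rw [hJ]
    apply integral_mono ((hw.const_mul _).sub (hP.const_mul _))
    · apply gP_bdd_integrable hk0 hT0 _ _ (G ^ 2)
      · intro y
        rw [abs_of_nonneg (sq_nonneg _)]
        obtain ⟨_, h2, h3⟩ := X_lower hk0 hT0 (∑ j, y j)
        exact pow_le_pow_left₀ h2 h3 2
      · fun_prop
    · intro y
      have hPn : 0 ≤ ∏ i, gW k T (y i) ^ 2 := Finset.prod_nonneg fun i _ => sq_nonneg _
      obtain ⟨h1, h2, h3⟩ := X_lower hk0 hT0 (∑ j, y j)
      have h5 := wW_nonneg T (∑ j, y j)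
      have h6 := wW_le_one T (∑ j, y j)
      have : G ^ 2 * wW T (∑ j, y j) ^ 2 - 2 * G / k ≤ X (∑ j, y j) ^ 2 := by
        change _ ≤ X _ at h1
        change _ ≤ X _ at h2
        generalize X (∑ j, y j) = x at *
        generalize wW T (∑ j, y j) = w at *
        rw [← hG] at h1
        have e : 2 * G / k = 2 * G * (1 / k) := by ring
        rw [e]
        have hb : 0 < 1 / (k:ℝ) := by positivity
        generalize 1 / (k:ℝ) = b at *
        have hwG : 0 ≤ w * G := by positivity
        have h7 : w * G * b ≤ G * b := by
          apply mul_le_mul_of_nonneg_right _ hb.le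
          exact mul_le_of_le_one_left hG0 h6
        rcases le_or_gt (w * G) b with h | h
        · have : w * G * (w * G) ≤ w * G * b := mul_le_mul_of_nonneg_left h hwG
          nlinarith [sq_nonneg x]
        · have : (w * G - b) ^ 2 ≤ x ^ 2 := pow_le_pow_left₀ (by linarith) h1 2
          nlinarith [sq_nonneg b]
      have := mul_le_mul_of_nonneg_right this hPn
      simp only [Pi.sub_apply]
      linarith
  rw [integral_sub (hw.const_mul _) (hP.const_mul _), integral_const_mul, integral_const_mul,
    hPi] at hmain
  have h9 : 2 * G / k * (1 / (T * (1 + k))) ^ Fintype.card {j : Fin k // j ≠ i} ≤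
      2 * G / k * (2 * A) := by
    apply mul_le_mul_of_nonneg_left _ (by positivity)
    linarith
  calc _ = G ^ 2 * A - 2 * G / k * (2 * A) := by ring
    _ ≤ _ := by linarith

/-- **Polymath8b, Theorem 3.9(xi)**: there is an absolute constant `C > 0` with
`M_k ≥ log k − C` for all `k ≥ C`. -/
theorem Mk_lower_bound : ∃ C : ℝ, 0 < C ∧ ∀ k : ℕ, C ≤ (k : ℝ) →
    Real.log k - C ≤ Mquant k := by
  refine ⟨100, by norm_num, ?_⟩
  intro k hk
  have hk0 : (0:ℝ) < k := by linarith
  have hk1 : 1 ≤ k := by exact_mod_cast (by linarith : (1:ℝ) ≤ k)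
  have hL4 : 4 < Real.log (1 + k) := by
    rw [Real.lt_log_iff_exp_lt (by linarith)]
    have h1 : Real.exp 4 = Real.exp 1 ^ 4 := by
      rw [← Real.exp_nat_mul]; norm_num
    have h2 : Real.exp 1 ^ 4 < 3 ^ 4 := by
      gcongr
      exact Real.exp_one_lt_d9.trans (by norm_num)
    rw [h1]
    linarith
  have hlog : Real.log k ≤ Real.log (1 + k) := Real.log_le_log hk0 (by linarith)
  obtain ⟨T, hT⟩ : ∃ T : ℝ, T = 1 / (Real.log (1 + k) + 3) := ⟨_, rfl⟩
  have hT0 : 0 < T := by rw [hT]; positivity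
  set L := Real.log (1 + (k:ℝ)) with hL
  have hJ := fun i => FW_J hk1 hT i
  have hI := fun i => FW_I hk1 hT0 i
  rw [← hL] at hJ
  set κ := (L / k) ^ 2 - 4 * (L / k) / k with hκ
  have hκe : κ = L * (L - 4) / k ^ 2 := by rw [hκ]; field_simp
  have hκ0 : 0 < κ := by
    rw [hκe]
    have : 0 < L - 4 := by linarith
    positivity
  have hIpos : 0 < sieveI (FW k T) := by
    let i : Fin k := ⟨0, hk1⟩
    refine lt_of_lt_of_le ?_ (sieveJ_le _ (FW_memLp hk1 hT0) (FW_supp hT0) i)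
    refine lt_of_lt_of_le ?_ (hJ i)
    apply mul_pos hκ0
    refine lt_of_lt_of_le ?_ (A_lower (ι := {j : Fin k // j ≠ i}) hk1 (by simp; omega) hT)
    positivity
  have hJI : ∀ i, κ * (T * (1 + k)) * sieveI (FW k T) ≤ sieveJ i (FW k T) := by
    intro i
    refine le_trans ?_ (hJ i)
    have := mul_le_mul_of_nonneg_left (hI i) (show 0 ≤ κ * (T * (1 + k)) by positivity)
    refine this.trans (le_of_eq ?_)
    field_simp
  refine le_trans ?_ (Mquant_ge (FW k T) (FW_memLp hk1 hT0) (FW_supp hT0) hIpos)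
  rw [le_div_iff₀ hIpos]
  calc _ ≤ k * (κ * (T * (1 + k))) * sieveI (FW k T) := by
        apply mul_le_mul_of_nonneg_right _ hIpos.le
        have e : k * (κ * (T * (1 + k))) = L * (L - 4) / (L + 3) * ((1 + k) / k) := by
          rw [hκe, hT]
          have : L + 3 ≠ 0 := by linarith
          field_simp
        rw [e]
        have h1 : 1 ≤ (1 + (k:ℝ)) / k := by
          rw [le_div_iff₀ hk0]; linarith
        have h2 : L - 7 ≤ L * (L - 4) / (L + 3) := by
          rw [le_div_iff₀ (by linarith)]
          nlinarith
        have h3 : 0 ≤ L * (L - 4) / (L + 3) :=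
          div_nonneg (mul_nonneg (by linarith) (by linarith)) (by linarith)
        have := le_mul_of_one_le_right h3 h1
        linarith
    _ = ∑ i : Fin k, κ * (T * (1 + k)) * sieveI (FW k T) := by
        simp
        ring
    _ ≤ _ := Finset.sum_le_sum fun i _ => hJI i
end
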